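/- arXiv:1811.03496 — 2 statements merged into one kernel-verified Lean document; each statement's English description precedes it below -/
import Mathlib

section
/- Let N ≥ 1 and consider the affinity dynamics of a single task over N agents with a greedy (max-affinity) assignment sequence σ. Then for every cycle k ≥ N − 1, the map i ↦ a k i is a bijection from the set of agents Fin N onto the integer interval {1, …, N}. -/
/-- Affinity dynamics of a single task over `N` agents with assignment
sequence `σ`: initially all affinities are 1; the assigned agent's affinity
is reset to 1, every other agent's affinity is incremented. -/
def affinity {N : ℕ} (σ : ℕ → Fin N) : ℕ → Fin N → ℕ
  | 0, _ => 1
  | k + 1, i => if σ k = i then 1 else affinity σ k i + 1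

/-- Affinity pressure of the task at cycle `k`. -/
def AP {N : ℕ} (σ : ℕ → Fin N) (k : ℕ) : ℚ :=
  (∑ i : Fin N, (affinity σ k i : ℚ)) / N - (N + 1) / 2

/-- `σ` is greedy (max-affinity): at every cycle the assigned agent has
maximal affinity. -/
def Greedy {N : ℕ} (σ : ℕ → Fin N) : Prop :=
  ∀ k i, affinity σ k i ≤ affinity σ k (σ k)

/-!
If two agents have the same affinity, neither has been assigned yet, so at cycle `k` a common value
can only be the largest conceivable one, `k + 1`. Suppose the greedy maximum is below `N`. By
pigeonhole two agents share a value, which is then the maximum, so some agent other than the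
assigned one attains it too. Hence an affinity `v < N` present at cycle `k` always produces `v + 1`
at cycle `k + 1`, and from cycle `N - 1` on all of `1, …, N` occur among the `N` agents.
-/

theorem bijOn_of_surjOn_of_card_le {α β : Type*} {f : α → β} {s : Finset α} {t : Finset β}
    (hf : Set.SurjOn f s t) (hcard : s.card ≤ t.card) : Set.BijOn f s t := by
  classical
  have himage : t = s.image f :=
    Finset.eq_of_subset_of_card_le (by simpa [Set.SurjOn, ← Finset.coe_subset] using hf)
      (Finset.card_image_le.trans hcard)
  have hinj : Set.InjOn f s :=
    Finset.card_image_iff.1 (Finset.card_image_le.antisymm (himage ▸ hcard))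
  simpa [himage] using hinj.bijOn_image

section Affinity

variable {N : ℕ} (σ : ℕ → Fin N) (k : ℕ)

theorem affinity_succ_self : affinity σ (k + 1) (σ k) = 1 :=
  if_pos rfl

variable {σ k} in
theorem affinity_succ_of_ne {i : Fin N} (h : i ≠ σ k) :
    affinity σ (k + 1) i = affinity σ k i + 1 :=
  if_neg h.symm

theorem one_le_affinity (i : Fin N) : 1 ≤ affinity σ k i := by
  cases k with
  | zero => exact le_rfl
  | succ k => rw [affinity]; split_ifs <;> omega

theorem affinity_le_add_one (i : Fin N) : affinity σ k i ≤ k + 1 := by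
  induction k with
  | zero => exact le_rfl
  | succ k ih => rw [affinity]; split_ifs <;> omega

theorem one_mem_range_affinity : 1 ∈ Set.range (affinity σ k) := by
  cases k with
  | zero => exact ⟨σ 0, rfl⟩
  | succ k => exact ⟨σ k, affinity_succ_self σ k⟩

variable {σ k}

theorem affinity_eq_add_one_of_ne {i j : Fin N} (hij : i ≠ j)
    (h : affinity σ k i = affinity σ k j) : affinity σ k i = k + 1 := by
  induction k with
  | zero => rfl
  | succ k ih =>
    have hi := one_le_affinity σ k i
    have hj := one_le_affinity σ k j
    rcases eq_or_ne i (σ k) with rfl | hiσ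
    · rw [affinity_succ_self, affinity_succ_of_ne hij.symm] at h
      omega
    rcases eq_or_ne j (σ k) with rfl | hjσ
    · rw [affinity_succ_self, affinity_succ_of_ne hij] at h
      omega
    rw [affinity_succ_of_ne hiσ, affinity_succ_of_ne hjσ, Nat.add_right_cancel_iff] at h
    rw [affinity_succ_of_ne hiσ, ih h]

namespace Greedy

theorem exists_ne_affinity_eq (hσ : Greedy σ) (hlt : affinity σ k (σ k) < N) :
    ∃ j ≠ σ k, affinity σ k j = affinity σ k (σ k) := by
  have hmaps : ∀ i ∈ Finset.univ, affinity σ k i ∈ Finset.Icc 1 (affinity σ k (σ k)) :=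
    fun i _ => Finset.mem_Icc.2 ⟨one_le_affinity σ k i, hσ k i⟩
  obtain ⟨p, -, q, -, hpq, heq⟩ :=
    Finset.exists_ne_map_eq_of_card_lt_of_maps_to (by simpa using hlt) hmaps
  have hp : affinity σ k p = affinity σ k (σ k) :=
    (hσ k p).antisymm <|
      (affinity_le_add_one σ k (σ k)).trans_eq (affinity_eq_add_one_of_ne hpq heq).symm
  rcases eq_or_ne p (σ k) with rfl | hpσ
  · exact ⟨q, hpq.symm, heq.symm⟩
  · exact ⟨p, hpσ, hp⟩

theorem add_one_mem_range_affinity (hσ : Greedy σ) {v : ℕ} (hv : v ∈ Set.range (affinity σ k))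
    (hlt : v < N) : v + 1 ∈ Set.range (affinity σ (k + 1)) := by
  obtain ⟨j, hjσ, hj⟩ : ∃ j ≠ σ k, affinity σ k j = v := by
    obtain ⟨i, rfl⟩ := hv
    rcases eq_or_ne i (σ k) with rfl | hiσ
    · exact hσ.exists_ne_affinity_eq hlt
    · exact ⟨i, hiσ, rfl⟩
  exact ⟨j, by rw [affinity_succ_of_ne hjσ, hj]⟩

theorem Icc_subset_range_affinity (hσ : Greedy σ) (k : ℕ) :
    Set.Icc 1 (min (k + 1) N) ⊆ Set.range (affinity σ k) := by
  rintro v ⟨h1, hle⟩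
  obtain ⟨hk, hN⟩ := le_min_iff.1 hle
  clear hle
  induction v, h1 using Nat.le_induction generalizing k with
  | base => exact one_mem_range_affinity σ k
  | succ v h1 ih =>
    obtain ⟨k, rfl⟩ := Nat.exists_eq_add_one_of_ne_zero (show k ≠ 0 by omega)
    exact hσ.add_one_mem_range_affinity (ih k (by omega) (by omega)) hN

end Greedy

end Affinity

theorem greedy_affinity_bijOn {N : ℕ} (hN : 1 ≤ N) (σ : ℕ → Fin N)
    (hσ : Greedy σ) : ∀ k, N - 1 ≤ k →
    Set.BijOn (fun i => affinity σ k i) Set.univ (Set.Icc 1 N) := by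
  intro k hk
  have hsurj : Set.SurjOn (affinity σ k) Set.univ (Set.Icc 1 N) := by
    rw [Set.SurjOn, Set.image_univ]
    simpa only [min_eq_right (Nat.sub_le_iff_le_add.1 hk)] using hσ.Icc_subset_range_affinity k
  rw [← Finset.coe_univ, ← Finset.coe_Icc] at hsurj ⊢
  exact bijOn_of_surjOn_of_card_le hsurj (by simp)
end

section
/- Let N ≥ 1 and consider the affinity dynamics of a single task over N agents with a greedy (max-affinity) assignment sequence σ. Then every window of N consecutive cycles assigns the task to every agent exactly once: for every cycle t, the set {σ t, σ (t+1), …, σ (t+N−1)} equals the whole set of agents Fin N. -/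
/-!
An affinity at most `d` means that the agent was assigned in one of the last `d` cycles, provided
there were that many. If a greedy `σ` repeats an agent after `d` cycles, that agent's affinity is at
most `d`; being maximal, it bounds all the others, so the `d` cycles before the repetition already
cover every agent. Hence `N ≤ d`: any `N` consecutive assignments are distinct, and so exhaust the
`N` agents.
-/

section Window

variable {N : ℕ} (σ : ℕ → Fin N) (t d : ℕ)

/-- The set of agents assigned during the `d` consecutive cycles `t, t + 1, …, t + d - 1`. -/
def assignedAgents : Finset (Fin N) :=
  Finset.image (fun j => σ (t + j)) (Finset.range d)

theorem assignedAgents_zero : assignedAgents σ t 0 = ∅ := rfl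

theorem assignedAgents_succ :
    assignedAgents σ t (d + 1) = insert (σ (t + d)) (assignedAgents σ t d) := by
  simp only [assignedAgents, Finset.range_add_one, Finset.image_insert]

theorem affinity_pos (k : ℕ) (i : Fin N) : 0 < affinity σ k i := by
  cases k with
  | zero => exact Nat.one_pos
  | succ k =>
    rw [affinity]
    split_ifs <;> exact Nat.succ_pos _

theorem affinity_succ_le_succ_iff (k : ℕ) (i : Fin N) :
    affinity σ (k + 1) i ≤ d + 1 ↔ i = σ k ∨ affinity σ k i ≤ d := by
  rw [affinity]
  split_ifs with h
  · simp [h]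
  · simp [Ne.symm h]

theorem affinity_add_le_iff_mem_assignedAgents (i : Fin N) :
    affinity σ (t + d) i ≤ d ↔ i ∈ assignedAgents σ t d := by
  induction d with
  | zero => simp [assignedAgents_zero, (affinity_pos σ t i).ne']
  | succ d ih =>
    rw [← Nat.add_assoc, affinity_succ_le_succ_iff, ih, assignedAgents_succ, Finset.mem_insert]

end Window

namespace Greedy

variable {N : ℕ} {σ : ℕ → Fin N} {t d : ℕ}

theorem assignedAgents_eq_univ_of_mem (hσ : Greedy σ)
    (hmem : σ (t + d) ∈ assignedAgents σ t d) : assignedAgents σ t d = Finset.univ := by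
  rw [← affinity_add_le_iff_mem_assignedAgents] at hmem
  refine Finset.eq_univ_of_forall fun i => ?_
  rw [← affinity_add_le_iff_mem_assignedAgents]
  exact (hσ (t + d) i).trans hmem

theorem card_assignedAgents (hσ : Greedy σ) (hd : d ≤ N) : (assignedAgents σ t d).card = d := by
  induction d with
  | zero => rw [assignedAgents_zero, Finset.card_empty]
  | succ d ih =>
    have hcard : (assignedAgents σ t d).card = d := ih (Nat.le_of_succ_le hd)
    have hnew : σ (t + d) ∉ assignedAgents σ t d := by
      intro hmem
      rw [hσ.assignedAgents_eq_univ_of_mem hmem, Finset.card_fin] at hcard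
      exact Nat.ne_of_gt hd hcard
    rw [assignedAgents_succ, Finset.card_insert_of_notMem hnew, hcard]

end Greedy

theorem greedy_window_covers_all_agents {N : ℕ} (hN : 1 ≤ N) (σ : ℕ → Fin N)
    (hσ : Greedy σ) : ∀ t,
    Finset.image (fun d => σ (t + d)) (Finset.range N) = Finset.univ := by
  intro t
  have hcard : (assignedAgents σ t N).card = Fintype.card (Fin N) := by
    rw [hσ.card_assignedAgents le_rfl, Fintype.card_fin]
  exact Finset.eq_univ_of_card _ hcard
end
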